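/- arXiv:2008.13163 — 2 statements merged into one kernel-verified Lean document; each statement's English description precedes it below -/
import Mathlib

section
/- The sequence of integrals a_r := ∫₀¹ L({1}_r;x)/x² dx satisfies the generating-function identity 1 - ∑_{r≥1} 2^r a_r u^r = Γ(1-u)Γ(1/2)/Γ(1/2-u) for |u| < 1/2, where L({1}_r;x) = (1/2^r)·(-log(1-x²))^r/r!. -/
open Set MeasureTheory Filter Topology

namespace LogIntegral

theorem one_sub_sq_mem_Ioo {x : ℝ} (hx : x ∈ Ioo (0 : ℝ) 1) : 1 - x ^ 2 ∈ Ioo (0 : ℝ) 1 :=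
  ⟨by nlinarith [hx.1, hx.2], by nlinarith [hx.1, hx.2]⟩

theorem integral_rpow_mul_one_sub_rpow {a b : ℝ} (ha : 0 < a) (hb : 0 < b) :
    ∫ t in (0 : ℝ)..1, t ^ (a - 1) * (1 - t) ^ (b - 1)
      = Real.Gamma a * Real.Gamma b / Real.Gamma (a + b) := by
  have h : (∫ t in (0 : ℝ)..1, ((t ^ (a - 1) * (1 - t) ^ (b - 1) : ℝ) : ℂ))
      = Complex.betaIntegral a b := by
    unfold Complex.betaIntegral
    refine intervalIntegral.integral_congr fun t ht => ?_
    rw [uIcc_of_le zero_le_one] at ht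
    push_cast [Complex.ofReal_cpow ht.1, Complex.ofReal_cpow (sub_nonneg.2 ht.2)]
    rfl
  have h2 := ProbabilityTheory.beta_eq_betaIntegralReal a b ha hb
  rw [← h, intervalIntegral.integral_ofReal, Complex.ofReal_re] at h2
  exact h2.symm

/-- The substitution `t = x ^ 2` reduces this integral to a Beta integral. -/
theorem integral_one_sub_sq_rpow {u : ℝ} (hu : u < 1) :
    ∫ x in (0 : ℝ)..1, (1 - x ^ 2) ^ (-u)
      = Real.Gamma (1 / 2) * Real.Gamma (1 - u) / Real.Gamma (3 / 2 - u) / 2 := by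
  have hB := integral_rpow_mul_one_sub_rpow (a := 1 / 2) (b := 1 - u) (by norm_num) (by linarith)
  rw [show (1 / 2 : ℝ) + (1 - u) = 3 / 2 - u by ring] at hB
  rw [← hB, eq_div_iff two_ne_zero, mul_comm, ← intervalIntegral.integral_const_mul,
    intervalIntegral.integral_of_le zero_le_one, intervalIntegral.integral_of_le zero_le_one]
  have hS := integral_comp_rpow_Ioi_of_pos (p := 2)
    (g := (Ioc (0 : ℝ) 1).indicator fun t : ℝ => t ^ (1 / 2 - 1 : ℝ) * (1 - t) ^ (1 - u - 1))
    two_pos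
  have hI (F : ℝ → ℝ) : ∫ x in Ioc 0 1, F x = ∫ x in Ioi 0, (Ioc 0 1).indicator F x := by
    rw [setIntegral_indicator measurableSet_Ioc,
      inter_eq_self_of_subset_right Ioc_subset_Ioi_self]
  rw [← hI] at hS
  rw [← hS, hI]
  refine setIntegral_congr_fun measurableSet_Ioi fun x (hx : 0 < x) => ?_
  have hiff : x ^ (2 : ℝ) ∈ Ioc (0 : ℝ) 1 ↔ x ∈ Ioc (0 : ℝ) 1 := by
    rw [Real.rpow_two]
    exact ⟨fun h => ⟨hx, by nlinarith [h.2]⟩, fun h => ⟨by positivity, by nlinarith [h.2]⟩⟩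
  by_cases h : x ∈ Ioc (0 : ℝ) 1
  · have e : (x ^ (2 : ℝ)) ^ (1 / 2 - 1 : ℝ) = x⁻¹ := by
      rw [← Real.rpow_mul hx.le, ← Real.rpow_neg_one]
      norm_num
    simp only [indicator_of_mem h, indicator_of_mem (hiff.2 h), smul_eq_mul, e]
    rw [Real.rpow_two, show (2 - 1 : ℝ) = 1 by norm_num, Real.rpow_one, show 1 - u - 1 = -u by ring]
    field_simp
  · simp only [indicator_of_notMem h, indicator_of_notMem (mt hiff.1 h), smul_zero]

theorem hasDerivAt_one_sub_rpow_div {u x : ℝ} (hx : x ∈ Ioo (0 : ℝ) 1) :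
    HasDerivAt (fun x : ℝ => (1 - (1 - x ^ 2) ^ (1 - u)) / x)
      (((1 - x ^ 2) ^ (-u) - 1) / x ^ 2 + (1 - 2 * u) * (1 - x ^ 2) ^ (-u)) x := by
  have hw := one_sub_sq_mem_Ioo hx
  have h0 : x ≠ 0 := hx.1.ne'
  have h := ((((hasDerivAt_pow 2 x).const_sub 1).rpow_const (p := 1 - u)
    (Or.inl hw.1.ne')).const_sub 1).fun_div (hasDerivAt_id x) h0
  refine h.congr_deriv ?_
  have e : (1 - x ^ 2) ^ (1 - u) = (1 - x ^ 2) ^ (-u) * (1 - x ^ 2) := by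
    rw [show 1 - u = -u + 1 by ring, Real.rpow_add hw.1, Real.rpow_one]
  rw [e, show 1 - u - 1 = -u by ring]
  simp only [id]
  field_simp
  push_cast
  ring

theorem continuousOn_one_sub_rpow_div {u : ℝ} (hu : u < 1) :
    ContinuousOn (fun x : ℝ => (1 - (1 - x ^ 2) ^ (1 - u)) / x) (Icc 0 1) := by
  intro x hx
  refine ContinuousAt.continuousWithinAt ?_
  rcases hx.1.eq_or_lt with rfl | h0
  · have h := (((hasDerivAt_pow 2 (0 : ℝ)).const_sub 1).rpow_const (p := 1 - u)
      (Or.inl (by norm_num))).const_sub 1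
    rw [hasDerivAt_iff_tendsto_slope] at h
    rw [continuousAt_iff_punctured_nhds]
    simp only [slope_fun_def_field] at h
    simpa using h
  · refine ContinuousAt.div ?_ continuousAt_id h0.ne'
    exact continuousAt_const.sub
      (ContinuousAt.rpow_const (by fun_prop) (Or.inr (by linarith)))

theorem rpow_neg_sub_one_div_nonneg {u x : ℝ} (hu : 0 ≤ u) (hx : x ∈ Ioo (0 : ℝ) 1) :
    0 ≤ ((1 - x ^ 2) ^ (-u) - 1) / x ^ 2 := by
  have hw := one_sub_sq_mem_Ioo hx
  have := Real.one_le_rpow_of_pos_of_le_one_of_nonpos hw.1 hw.2.le (neg_nonpos.2 hu)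
  exact div_nonneg (by linarith) (sq_nonneg x)

theorem ae_mem_Ioo_of_mem_uIoc :
    ∀ᵐ x : ℝ, x ∈ uIoc (0 : ℝ) 1 → x ∈ Ioo (0 : ℝ) 1 := by
  filter_upwards [compl_mem_ae_iff.2 (measure_singleton (μ := volume) (1 : ℝ))] with x hx h
  rw [uIoc_of_le zero_le_one] at h
  exact ⟨h.1, lt_of_le_of_ne h.2 hx⟩

theorem intervalIntegrable_of_abs_le_on_Ioo {f g : ℝ → ℝ} (hf : Measurable f)
    (hg : IntervalIntegrable g volume 0 1) (h : ∀ x ∈ Ioo (0 : ℝ) 1, |f x| ≤ g x) :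
    IntervalIntegrable f volume 0 1 := by
  refine hg.mono_fun' hf.aestronglyMeasurable ?_
  refine (ae_restrict_iff' measurableSet_uIoc).2 ?_
  filter_upwards [ae_mem_Ioo_of_mem_uIoc] with x hx hm using h x (hx hm)

theorem intervalIntegrable_add_of_nonneg {u : ℝ} (hu0 : 0 ≤ u) (hu : u < 1 / 2) :
    IntervalIntegrable (fun x : ℝ =>
      ((1 - x ^ 2) ^ (-u) - 1) / x ^ 2 + (1 - 2 * u) * (1 - x ^ 2) ^ (-u)) volume 0 1 := by
  apply intervalIntegral.intervalIntegrable_deriv_of_nonneg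
    (g := fun x : ℝ => (1 - (1 - x ^ 2) ^ (1 - u)) / x)
  · rw [uIcc_of_le zero_le_one]
    exact continuousOn_one_sub_rpow_div (by linarith)
  · intro x hx
    rw [min_eq_left zero_le_one, max_eq_right zero_le_one] at hx
    exact hasDerivAt_one_sub_rpow_div hx
  · intro x hx
    rw [min_eq_left zero_le_one, max_eq_right zero_le_one] at hx
    have := Real.rpow_nonneg (one_sub_sq_mem_Ioo hx).1.le (-u)
    have := rpow_neg_sub_one_div_nonneg hu0 hx
    have : 0 ≤ 1 - 2 * u := by linarith
    positivity

theorem abs_rpow_neg_sub_one_le {u w : ℝ} (hw : w ∈ Ioo (0 : ℝ) 1) :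
    |w ^ (-u) - 1| ≤ w ^ (-|u|) - 1 := by
  have h1 : w ^ (-u) ≤ w ^ (-|u|) :=
    Real.rpow_le_rpow_of_exponent_ge hw.1 hw.2.le (neg_le_neg (le_abs_self u))
  have h2 : w ^ |u| ≤ w ^ (-u) :=
    Real.rpow_le_rpow_of_exponent_ge hw.1 hw.2.le (neg_le_abs u)
  have h3 : w ^ (-|u|) * w ^ |u| = 1 := by rw [← Real.rpow_add hw.1]; simp
  have h4 := Real.rpow_pos_of_pos hw.1 |u|
  have h5 := Real.rpow_pos_of_pos hw.1 (-|u|)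
  rw [abs_le]
  constructor <;> nlinarith [sq_nonneg (w ^ (-|u|) - w ^ |u|)]

theorem intervalIntegrable_one_sub_sq_rpow {u : ℝ} (hu : |u| < 1 / 2) :
    IntervalIntegrable (fun x : ℝ => (1 - x ^ 2) ^ (-u)) volume 0 1 := by
  have hc : 0 < 1 - 2 * |u| := by linarith
  refine intervalIntegrable_of_abs_le_on_Ioo (by fun_prop)
    ((intervalIntegrable_add_of_nonneg (abs_nonneg u) hu).const_mul (1 - 2 * |u|)⁻¹)
    fun x hx => ?_
  have hw := one_sub_sq_mem_Ioo hx
  have h1 : (1 - x ^ 2) ^ (-u) ≤ (1 - x ^ 2) ^ (-|u|) :=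
    Real.rpow_le_rpow_of_exponent_ge hw.1 hw.2.le (neg_le_neg (le_abs_self u))
  have h2 := rpow_neg_sub_one_div_nonneg (abs_nonneg u) hx
  rw [abs_of_nonneg (Real.rpow_nonneg hw.1.le _), inv_mul_eq_div, le_div_iff₀ hc]
  nlinarith

theorem intervalIntegrable_rpow_neg_sub_one_div {u : ℝ} (hu : |u| < 1 / 2) :
    IntervalIntegrable (fun x : ℝ => ((1 - x ^ 2) ^ (-u) - 1) / x ^ 2) volume 0 1 := by
  refine intervalIntegrable_of_abs_le_on_Ioo (by fun_prop)
    (intervalIntegrable_add_of_nonneg (abs_nonneg u) hu) fun x hx => ?_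
  have hw := one_sub_sq_mem_Ioo hx
  have hc : 0 ≤ 1 - 2 * |u| := by linarith
  rw [abs_div, abs_of_nonneg (sq_nonneg x)]
  have := div_le_div_of_nonneg_right (abs_rpow_neg_sub_one_le (u := u) hw) (sq_nonneg x)
  have := mul_nonneg hc (Real.rpow_nonneg hw.1.le (-|u|))
  linarith

theorem one_sub_integral_eq_Gamma {u : ℝ} (hu : |u| < 1 / 2) :
    1 - ∫ x in (0 : ℝ)..1, ((1 - x ^ 2) ^ (-u) - 1) / x ^ 2
      = Real.Gamma (1 - u) * Real.Gamma (1 / 2) / Real.Gamma (1 / 2 - u) := by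
  have hu' := (abs_lt.1 hu).2
  have h1 := intervalIntegrable_rpow_neg_sub_one_div hu
  have h2 := (intervalIntegrable_one_sub_sq_rpow hu).const_mul (1 - 2 * u)
  have h := intervalIntegral.integral_eq_sub_of_hasDerivAt_of_le zero_le_one
    (continuousOn_one_sub_rpow_div (u := u) (by linarith))
    (fun x hx => hasDerivAt_one_sub_rpow_div hx) (h1.add h2)
  rw [intervalIntegral.integral_add h1 h2, intervalIntegral.integral_const_mul,
    integral_one_sub_sq_rpow (by linarith)] at h
  have hz : (1 - (1 : ℝ) ^ 2) ^ (1 - u) = 0 := by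
    rw [one_pow, sub_self, Real.zero_rpow (by linarith)]
  have hG : Real.Gamma (3 / 2 - u) = (1 / 2 - u) * Real.Gamma (1 / 2 - u) := by
    rw [← Real.Gamma_add_one (by linarith)]
    congr 1
    ring
  have hne : 1 / 2 - u ≠ 0 := by linarith
  have hGne : Real.Gamma (1 / 2 - u) ≠ 0 := (Real.Gamma_pos_of_pos (by linarith)).ne'
  rw [hz, hG] at h
  have e : (1 - 2 * u) * (Real.Gamma (1 / 2) * Real.Gamma (1 - u)
      / ((1 / 2 - u) * Real.Gamma (1 / 2 - u)) / 2)
      = Real.Gamma (1 - u) * Real.Gamma (1 / 2) / Real.Gamma (1 / 2 - u) := by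
    rw [show 1 - 2 * u = 2 * (1 / 2 - u) by ring]
    generalize 1 / 2 - u = v at hne hGne ⊢
    field_simp
  rw [e] at h
  norm_num at h ⊢
  linarith

theorem hasSum_log_pow_div {u x : ℝ} (hx : x ∈ Ioo (0 : ℝ) 1) :
    HasSum (fun r : ℕ => (-Real.log (1 - x ^ 2)) ^ (r + 1) * u ^ (r + 1)
        / ((r + 1).factorial : ℝ) / x ^ 2)
      (((1 - x ^ 2) ^ (-u) - 1) / x ^ 2) := by
  have h := NormedSpace.expSeries_div_hasSum_exp (-Real.log (1 - x ^ 2) * u)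
  rw [← Real.exp_eq_exp_ℝ, ← hasSum_nat_add_iff' 1] at h
  rw [Real.rpow_def_of_pos (one_sub_sq_mem_Ioo hx).1]
  simp only [mul_pow, Finset.sum_range_one, pow_zero, Nat.factorial_zero, Nat.cast_one, mul_one,
    div_one] at h
  simpa only [neg_mul_comm] using h.div_const (x ^ 2)

theorem hasSum_integral_log_pow_div {u : ℝ} (hu : |u| < 1 / 2) :
    HasSum (fun r : ℕ => ∫ x in (0 : ℝ)..1, (-Real.log (1 - x ^ 2)) ^ (r + 1) * u ^ (r + 1)
        / ((r + 1).factorial : ℝ) / x ^ 2)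
      (∫ x in (0 : ℝ)..1, ((1 - x ^ 2) ^ (-u) - 1) / x ^ 2) := by
  refine intervalIntegral.hasSum_integral_of_dominated_convergence
    (fun r x => (-Real.log (1 - x ^ 2)) ^ (r + 1) * |u| ^ (r + 1)
        / ((r + 1).factorial : ℝ) / x ^ 2) (fun r => ?_) (fun r => ?_) ?_ ?_ ?_
  · exact Measurable.aestronglyMeasurable (by fun_prop)
  · filter_upwards [ae_mem_Ioo_of_mem_uIoc] with x hx hm
    have hw := one_sub_sq_mem_Ioo (hx hm)
    have hl : 0 ≤ -Real.log (1 - x ^ 2) := neg_nonneg.2 (Real.log_nonpos hw.1.le hw.2.le)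
    rw [Real.norm_eq_abs, abs_div, abs_div, abs_mul, abs_pow, abs_pow, abs_of_nonneg hl,
      abs_of_nonneg (sq_nonneg x), Nat.abs_cast]
  · filter_upwards [ae_mem_Ioo_of_mem_uIoc] with x hx hm using (hasSum_log_pow_div (hx hm)).summable
  · refine (intervalIntegrable_rpow_neg_sub_one_div (u := |u|) (by rwa [abs_abs])).congr_ae ?_
    refine (ae_restrict_iff' measurableSet_uIoc).2 ?_
    filter_upwards [ae_mem_Ioo_of_mem_uIoc] with x hx hm
      using (hasSum_log_pow_div (hx hm)).tsum_eq.symm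
  · filter_upwards [ae_mem_Ioo_of_mem_uIoc] with x hx hm using hasSum_log_pow_div (hx hm)

end LogIntegral

theorem stmt6 (u : ℝ) (hu : |u| < 1 / 2) :
    1 - ∑' r : ℕ,
        (2 : ℝ) ^ (r + 1)
          * (∫ x in (0:ℝ)..1,
              ((-Real.log (1 - x ^ 2)) ^ (r + 1) / ((2:ℝ) ^ (r + 1) * ((r + 1).factorial : ℝ))) / x ^ 2)
          * u ^ (r + 1)
      = Real.Gamma (1 - u) * Real.Gamma (1 / 2) / Real.Gamma (1 / 2 - u) := by
  rw [← LogIntegral.one_sub_integral_eq_Gamma hu,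
    ← (LogIntegral.hasSum_integral_log_pow_div hu).tsum_eq]
  congr 2
  ext r
  rw [← intervalIntegral.integral_const_mul, ← intervalIntegral.integral_mul_const]
  congr 1
  ext x
  field_simp
end

section
/- ∫₀¹ t(1,1;x) dx = log 2 - ζ(2)/4, where t(1,1;x) = ∑_{0<m<n} x^{2n-1}/((2m-1)(2n-1)) and the integral is the termwise sum ∑_{0<m<n} 1/((2m-1)(2n-1)(2n)). -/
open Finset Filter Topology

/-- The part of the square `(∑ i < N, f i)²` lying on or above the antidiagonal `i + j = M`. -/
noncomputable def upperSum (f : ℕ → ℝ) (M N : ℕ) : ℝ :=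
  ∑ p ∈ (range N ×ˢ range N) with M ≤ p.1 + p.2, f p.1 * f p.2

lemma upperSum_eq (f : ℕ → ℝ) {M N : ℕ} (h : M ≤ N) :
    upperSum f M N =
      (∑ i ∈ range N, f i) ^ 2 - ∑ n ∈ range M, ∑ p ∈ antidiagonal n, f p.1 * f p.2 := by
  have h1 : ∑ n ∈ range M, ∑ p ∈ antidiagonal n, f p.1 * f p.2 =
      ∑ p ∈ (range N ×ˢ range N) with ¬ M ≤ p.1 + p.2, f p.1 * f p.2 := by
    rw [← sum_fiberwise_of_maps_to (t := range M) (g := fun p : ℕ × ℕ => p.1 + p.2)]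
    · refine sum_congr rfl fun n hn => sum_congr ?_ fun _ _ => rfl
      ext ⟨a, b⟩
      simp only [mem_range, HasAntidiagonal.mem_antidiagonal, mem_filter, mem_product] at hn ⊢
      omega
    · intro p hp
      simp only [mem_filter, mem_range] at hp ⊢
      omega
  rw [h1, upperSum, eq_sub_iff_add_eq, sum_filter_add_sum_filter_not, sq, sum_mul_sum, sum_product]

lemma sum_antidiagonal_inv_mul_inv {c : ℝ} (hc : 0 < c) (a : ℝ) (ha : 0 < a) (n : ℕ) :
    ∑ p ∈ antidiagonal n, 1 / (a * (p.1 : ℝ) + c) * (1 / (a * (p.2 : ℝ) + c)) =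
      2 / (a * n + 2 * c) * ∑ k ∈ range (n + 1), 1 / (a * (k : ℝ) + c) := by
  have h1 : ∑ p ∈ antidiagonal n, 1 / (a * (p.1 : ℝ) + c) * (1 / (a * (p.2 : ℝ) + c)) =
      ∑ p ∈ antidiagonal n,
        1 / (a * n + 2 * c) * (1 / (a * (p.1 : ℝ) + c) + 1 / (a * (p.2 : ℝ) + c)) := by
    refine sum_congr rfl fun p hp => ?_
    rw [← HasAntidiagonal.mem_antidiagonal.mp hp]
    push_cast
    have h1 : 0 < a * (p.1 : ℝ) + c := by positivity
    have h2 : 0 < a * (p.2 : ℝ) + c := by positivity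
    have h3 : 0 < a * ((p.1 : ℝ) + p.2) + 2 * c := by positivity
    field_simp
    ring
  have h2 : ∑ p ∈ antidiagonal n, 1 / (a * (p.1 : ℝ) + c) =
      ∑ k ∈ range (n + 1), 1 / (a * (k : ℝ) + c) :=
    Nat.sum_antidiagonal_eq_sum_range_succ_mk (fun p : ℕ × ℕ => 1 / (a * (p.1 : ℝ) + c)) n
  have h3 : ∑ p ∈ antidiagonal n, 1 / (a * (p.2 : ℝ) + c) =
      ∑ k ∈ range (n + 1), 1 / (a * (k : ℝ) + c) := by
    rw [← h2, ← Nat.sum_antidiagonal_swap]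
    rfl
  rw [h1, ← mul_sum, sum_add_distrib, h2, h3]
  ring

lemma upperSum_inv_succ (N : ℕ) :
    upperSum (fun k => 1 / (1 * (k : ℝ) + 1)) N N =
      ∑ k ∈ range N, 1 / ((k : ℝ) + 1) ^ 2
        - 2 / ((N : ℝ) + 1) * ∑ k ∈ range N, 1 / (1 * (k : ℝ) + 1) := by
  rw [upperSum_eq _ le_rfl]
  simp_rw [sum_antidiagonal_inv_mul_inv one_pos 1 one_pos]
  induction N with
  | zero => simp
  | succ N ih =>
    rw [sum_range_succ (fun n : ℕ => 2 / (1 * (n : ℝ) + 2 * 1) * _),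
      sum_range_succ (fun k : ℕ => 1 / ((k : ℝ) + 1) ^ 2)]
    rw [sub_eq_iff_eq_add] at ih
    rw [sum_range_succ (fun k : ℕ => 1 / (1 * (k : ℝ) + 1)), add_sq, ih]
    push_cast
    have h1 : (N : ℝ) + 1 ≠ 0 := by positivity
    have h2 : (N : ℝ) + 2 ≠ 0 := by positivity
    have h3 : (N : ℝ) + 1 + 1 ≠ 0 := by positivity
    simp only [one_mul, mul_one]
    field_simp
    ring

lemma le_upperSum_odd (N : ℕ) :
    1 / 4 * upperSum (fun k => 1 / (1 * (k : ℝ) + 1)) N N ≤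
      upperSum (fun k => 1 / (2 * (k : ℝ) + 1)) N N := by
  rw [upperSum, upperSum, mul_sum]
  refine sum_le_sum fun p _ => ?_
  calc 1 / 4 * (1 / (1 * (p.1 : ℝ) + 1) * (1 / (1 * (p.2 : ℝ) + 1)))
      = 1 / (2 * (p.1 : ℝ) + 2) * (1 / (2 * (p.2 : ℝ) + 2)) := by field_simp; ring
    _ ≤ _ := by gcongr <;> norm_num

lemma upperSum_odd_le (N : ℕ) :
    upperSum (fun k => 1 / (2 * (k : ℝ) + 1)) (N + 2) (N + 2) ≤
      1 / 4 * ∑ k ∈ range (N + 1), 1 / ((k : ℝ) + 1) ^ 2 := by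
  have h1 : upperSum (fun k => 1 / (1 * (k : ℝ) + 1)) N (N + 1) =
      ∑ k ∈ range (N + 1), 1 / ((k : ℝ) + 1) ^ 2 := by
    have h := upperSum_inv_succ (N + 1)
    rw [upperSum_eq _ le_rfl, sum_range_succ (fun n => ∑ p ∈ antidiagonal n, _) N,
      sum_antidiagonal_inv_mul_inv one_pos 1 one_pos] at h
    rw [upperSum_eq _ (Nat.le_succ N)]
    push_cast at h
    rw [show (N : ℝ) + 1 + 1 = 1 * N + 2 * 1 by ring] at h
    linarith
  have h2 : upperSum (fun k => 1 / (2 * (k : ℝ) + 1)) (N + 2) (N + 2) =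
      upperSum (fun k => 1 / (2 * ((k + 1 : ℕ) : ℝ) + 1)) N (N + 1) := by
    refine (sum_nbij (fun p : ℕ × ℕ => (p.1 + 1, p.2 + 1)) ?_ ?_ ?_ fun _ _ => rfl).symm
    · intro p hp
      simp only [mem_filter, mem_product, mem_range] at hp ⊢
      omega
    · rintro ⟨a, b⟩ _ ⟨c, d⟩ _ h
      simpa using h
    · rintro ⟨a, b⟩ h
      simp only [coe_filter, mem_product, mem_range, Set.mem_ofPred_eq] at h
      refine ⟨(a - 1, b - 1), ?_, ?_⟩
      · simp only [coe_filter, mem_product, mem_range, Set.mem_ofPred_eq]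
        omega
      · simp only [Prod.mk.injEq]
        omega
  rw [h2, ← h1, upperSum, upperSum, mul_sum]
  refine sum_le_sum fun p _ => ?_
  calc 1 / (2 * ((p.1 + 1 : ℕ) : ℝ) + 1) * (1 / (2 * ((p.2 + 1 : ℕ) : ℝ) + 1))
      ≤ 1 / (2 * (p.1 : ℝ) + 2) * (1 / (2 * (p.2 : ℝ) + 2)) := by
        push_cast
        gcongr 1 / ?_ * (1 / ?_) <;> linarith
    _ = _ := by field_simp; ring

lemma tendsto_sum_inv_sq :
    Tendsto (fun N : ℕ => ∑ k ∈ range N, 1 / ((k : ℝ) + 1) ^ 2) atTop (𝓝 (Real.pi ^ 2 / 6)) := by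
  have h := (hasSum_nat_add_iff' 1).mpr hasSum_zeta_two
  simpa using h.tendsto_sum_nat

lemma tendsto_sum_odd_inv_sq :
    Tendsto (fun N : ℕ => ∑ k ∈ range N, (1 / (2 * (k : ℝ) + 1)) ^ 2) atTop
      (𝓝 (Real.pi ^ 2 / 8)) := by
  have h : ∀ N : ℕ, ∑ k ∈ range N, (1 / (2 * (k : ℝ) + 1)) ^ 2 =
      ∑ k ∈ range (2 * N), 1 / ((k : ℝ) + 1) ^ 2
        - 1 / 4 * ∑ k ∈ range N, 1 / ((k : ℝ) + 1) ^ 2 := by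
    intro N
    induction N with
    | zero => simp
    | succ N ih =>
      rw [show 2 * (N + 1) = 2 * N + 1 + 1 by ring]
      simp only [sum_range_succ, ih]
      push_cast
      field_simp
      ring
  simp_rw [h]
  have h2 : Tendsto (fun N : ℕ => 2 * N) atTop atTop := tendsto_id.const_mul_atTop' two_pos
  rw [show Real.pi ^ 2 / 8 = Real.pi ^ 2 / 6 - 1 / 4 * (Real.pi ^ 2 / 6) by ring]
  exact (tendsto_sum_inv_sq.comp h2).sub (tendsto_sum_inv_sq.const_mul (1 / 4))

lemma tendsto_upperSum_odd :
    Tendsto (fun N : ℕ => upperSum (fun k => 1 / (2 * (k : ℝ) + 1)) N N) atTop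
      (𝓝 (Real.pi ^ 2 / 24)) := by
  have hc : Tendsto (fun N : ℕ => 2 / ((N : ℝ) + 1) * ∑ k ∈ range N, 1 / (1 * (k : ℝ) + 1))
      atTop (𝓝 0) := by
    have h1 : Tendsto (fun n : ℕ => 1 / (1 * (n : ℝ) + 1)) atTop (𝓝 0) := by
      simpa using tendsto_one_div_add_atTop_nhds_zero_nat (𝕜 := ℝ)
    have h2 := h1.cesaro.const_mul 2
    rw [mul_zero] at h2
    refine squeeze_zero' (Eventually.of_forall fun N => by positivity) ?_ h2
    filter_upwards [eventually_gt_atTop 0] with N hN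
    have : (0 : ℝ) < N := by exact_mod_cast hN
    rw [← mul_assoc, ← div_eq_mul_inv]
    gcongr
    linarith
  rw [← tendsto_add_atTop_iff_nat 2]
  refine tendsto_of_tendsto_of_tendsto_of_le_of_le ?_ ?_
    (fun N => le_upperSum_odd (N + 2)) upperSum_odd_le
  · simp_rw [upperSum_inv_succ]
    have h := ((tendsto_sum_inv_sq.sub hc).const_mul (1 / 4))
    rw [← tendsto_add_atTop_iff_nat 2] at h
    convert h using 2
    ring
  · have h := tendsto_sum_inv_sq.const_mul (1 / 4)
    rw [← tendsto_add_atTop_iff_nat 1] at h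
    convert h using 2
    ring

lemma tendsto_sum_log_two :
    Tendsto (fun N : ℕ => ∑ n ∈ range N, 1 / ((2 * (n : ℝ) + 1) * (2 * n + 2))) atTop
      (𝓝 (Real.log 2)) := by
  have h : ∀ N : ℕ, ∑ n ∈ range N, 1 / ((2 * (n : ℝ) + 1) * (2 * n + 2)) =
      (harmonic (2 * N) : ℝ) - harmonic N := by
    intro N
    induction N with
    | zero => simp
    | succ N ih =>
      rw [show 2 * (N + 1) = 2 * N + 1 + 1 by ring, sum_range_succ, ih]
      simp only [harmonic_succ]
      push_cast
      field_simp
      ring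
  simp_rw [h]
  have h2 : Tendsto (fun N : ℕ => 2 * N) atTop atTop := tendsto_id.const_mul_atTop' two_pos
  have h3 := ((Real.tendsto_harmonic_sub_log.comp h2).sub
    Real.tendsto_harmonic_sub_log).add_const (Real.log 2)
  rw [sub_self, zero_add] at h3
  refine h3.congr' ?_
  filter_upwards [eventually_gt_atTop 0] with N hN
  have : (N : ℝ) ≠ 0 := by positivity
  simp only [Function.comp_apply]
  push_cast
  rw [Real.log_mul two_ne_zero this]
  ring

lemma sum_mul_partial_sum_odd (N : ℕ) :
    ∑ n ∈ range N,
        (∑ k ∈ range n, 1 / (2 * (k : ℝ) + 1)) * (1 / ((2 * (n : ℝ) + 1) * (2 * n + 2))) =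
      1 / 2 * (upperSum (fun k => 1 / (2 * (k : ℝ) + 1)) N N
        - ∑ k ∈ range N, (1 / (2 * (k : ℝ) + 1)) ^ 2)
        + ∑ n ∈ range N, 1 / ((2 * (n : ℝ) + 1) * (2 * n + 2)) := by
  rw [upperSum_eq _ le_rfl]
  simp_rw [sum_antidiagonal_inv_mul_inv one_pos 2 two_pos]
  induction N with
  | zero => simp
  | succ N ih =>
    rw [sum_range_succ, ih]
    simp only [sum_range_succ _ N]
    generalize ∑ k ∈ range N, 1 / (2 * (k : ℝ) + 1) = S
    field_simp
    ring

lemma hasSum_mul_partial_sum_odd :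
    HasSum (fun n : ℕ => (∑ k ∈ range (n + 1), 1 / (2 * (k : ℝ) + 1)) *
      (1 / ((2 * (n : ℝ) + 3) * (2 * n + 4)))) (Real.log 2 - (Real.pi ^ 2 / 6) / 4) := by
  have h : HasSum (fun n : ℕ => (∑ k ∈ range n, 1 / (2 * (k : ℝ) + 1)) *
      (1 / ((2 * (n : ℝ) + 1) * (2 * n + 2)))) (Real.log 2 - (Real.pi ^ 2 / 6) / 4) := by
    rw [hasSum_iff_tendsto_nat_of_nonneg fun n => by positivity]
    simp_rw [sum_mul_partial_sum_odd]
    convert ((tendsto_upperSum_odd.sub tendsto_sum_odd_inv_sq).const_mul (1 / 2)).add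
      tendsto_sum_log_two using 2
    ring
  have h1 := (hasSum_nat_add_iff' 1).mpr h
  simp only [range_one, sum_singleton, range_zero, sum_empty, zero_mul, sub_zero] at h1
  have h2 : ∀ n : ℕ, (2 * (n : ℝ) + 3) * (2 * n + 4) =
      (2 * ((n + 1 : ℕ) : ℝ) + 1) * (2 * ((n + 1 : ℕ) : ℝ) + 2) := by
    intro n
    push_cast
    ring
  simpa only [h2] using h1

theorem stmt8 :
    (∑' (i : ℕ) (j : ℕ),
        (1 : ℝ) / ((2 * (i : ℝ) + 1) * (2 * ((i : ℝ) + (j : ℝ)) + 3) * (2 * ((i : ℝ) + (j : ℝ)) + 4)))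
      = Real.log 2 - (Real.pi ^ 2 / 6) / 4 := by
  set f : ℕ × ℕ → ℝ := fun p => 1 / ((2 * (p.1 : ℝ) + 1) * (2 * ((p.1 : ℝ) + (p.2 : ℝ)) + 3) *
    (2 * ((p.1 : ℝ) + (p.2 : ℝ)) + 4)) with hf
  have hf0 : ∀ p, 0 ≤ f p := fun p => by positivity
  have hdiag : ∀ n : ℕ, ∑ p ∈ antidiagonal n, f p =
      (∑ k ∈ range (n + 1), 1 / (2 * (k : ℝ) + 1)) *
        (1 / ((2 * (n : ℝ) + 3) * (2 * n + 4))) := by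
    intro n
    rw [← Nat.sum_antidiagonal_eq_sum_range_succ_mk (fun p : ℕ × ℕ => 1 / (2 * (p.1 : ℝ) + 1)) n,
      sum_mul]
    refine sum_congr rfl fun p hp => ?_
    rw [← HasAntidiagonal.mem_antidiagonal.mp hp, hf]
    push_cast
    field_simp
  have hn := hasSum_mul_partial_sum_odd
  simp_rw [← hdiag] at hn
  have hsig : ∀ n : ℕ, HasSum (fun p : antidiagonal n => f p) (∑ p ∈ antidiagonal n, f p) :=
    fun n => (antidiagonal n).hasSum f
  have hs : Summable fun q : Σ n : ℕ, antidiagonal n => f (HasAntidiagonal.sigmaAntidiagonalEquivProd q) := by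
    refine (summable_sigma_of_nonneg fun _ => hf0 _).mpr ⟨fun n => (hsig n).summable, ?_⟩
    exact hn.summable.congr fun n => (hsig n).tsum_eq.symm
  have hsum : HasSum (fun q : Σ n : ℕ, antidiagonal n =>
      f (HasAntidiagonal.sigmaAntidiagonalEquivProd q))
      (Real.log 2 - (Real.pi ^ 2 / 6) / 4) := by
    rw [hn.unique (hs.hasSum.sigma hsig)]
    exact hs.hasSum
  have hS : HasSum f (Real.log 2 - (Real.pi ^ 2 / 6) / 4) :=
    HasAntidiagonal.sigmaAntidiagonalEquivProd.hasSum_iff.mp hsum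
  exact hS.summable.tsum_prod.symm.trans hS.tsum_eq
end
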